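/- Let D be a minimal Enriques diagram with exactly one root R. If m_R = 3, then D is isomorphic to the diagram D_k for some k ≥ 4, or to the diagram E_{6l+j} for some l ≥ 1 and j ∈ {0,1,2}, or to the diagram J_{l,k} for some l ≥ 2 and k ≥ 0. -/

import Mathlib

open Classical Finset

/-- The raw data of a finite weighted forest equipped with a proximity relation.
The vertices are the elements of `Fin n`; `parent v` is the immediate predecessor of `v`
(`none` iff `v` is a root); `wt v` is the weight of `v`; and `prox a b` means
that `a` is proximate to `b`. -/
structure PreDiagram where
  n : ℕ
  parent : Fin n → Option (Fin n)
  wt : Fin n → ℕ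
  prox : Fin n → Fin n → Prop

namespace PreDiagram

variable (D : PreDiagram)

/-- `a` is the immediate predecessor of `b`. -/
def ImPred (a b : Fin D.n) : Prop := D.parent b = some a

/-- `a` is a predecessor of `b` (reflexive-transitive closure of `ImPred`). -/
def Pred (a b : Fin D.n) : Prop := Relation.ReflTransGen D.ImPred a b

/-- `a` is a proper predecessor of `b`. -/
def ProperPred (a b : Fin D.n) : Prop := Relation.TransGen D.ImPred a b

/-- `a` is a remote predecessor of `b`: a proper but not immediate predecessor. -/
def RemotePred (a b : Fin D.n) : Prop := D.ProperPred a b ∧ ¬ D.ImPred a b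

def IsRoot (v : Fin D.n) : Prop := D.parent v = none

/-- A leaf is a vertex with no proper successor. -/
def IsLeaf (v : Fin D.n) : Prop := ∀ w, ¬ D.ImPred v w

/-- `a` is remotely proximate to `b`: proximate to `b`, and `b` is a remote predecessor. -/
def RemoteProx (a b : Fin D.n) : Prop := D.prox a b ∧ D.RemotePred b a

/-- A satellite is a vertex proximate to a remote predecessor. -/
def IsSatellite (v : Fin D.n) : Prop := ∃ t, D.RemoteProx v t

/-- A free vertex is one that is not a satellite. -/
def IsFree (v : Fin D.n) : Prop := ¬ D.IsSatellite v

/-- The laws of a minimal Enriques diagram. -/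
structure IsMED : Prop where
  /-- The graph is a forest: no vertex is a proper predecessor of itself. -/
  forest : ∀ v, ¬ D.ProperPred v v
  /-- Every weight is at least `1`. -/
  wt_pos : ∀ v, 1 ≤ D.wt v
  /-- Law of Proximity: a root is proximate to no vertex. -/
  root_not_prox : ∀ v, D.IsRoot v → ∀ w, ¬ D.prox v w
  /-- Law of Proximity: a non-root is proximate to its immediate predecessor. -/
  prox_parent : ∀ v u, D.parent v = some u → D.prox v u
  /-- Law of Proximity: any other vertex a non-root is proximate to is a remote predecessor. -/
  prox_remote : ∀ v u w, D.parent v = some u → D.prox v w → w ≠ u → D.RemotePred w v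
  /-- Law of Proximity: a non-root is proximate to at most one vertex other than its
  immediate predecessor. -/
  prox_unique : ∀ v u w w', D.parent v = some u → D.prox v w → D.prox v w' →
      w ≠ u → w' ≠ u → w = w'
  /-- Law of Proximity: if `a` is proximate to `b` and `c` lies properly between them,
  then `c` is proximate to `b`. -/
  prox_between : ∀ a b c, D.prox a b → D.ProperPred b c → D.ProperPred c a → D.prox c b
  /-- Proximity Inequality. -/
  prox_ineq : ∀ v, ∑ w ∈ univ.filter (fun w => D.prox w v), D.wt w ≤ D.wt v
  /-- Law of Succession: a vertex `v` has at most `wt v` immediate successors. -/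
  succ_card : ∀ v, (univ.filter (fun w => D.ImPred v w)).card ≤ D.wt v
  /-- Law of Succession: at most two immediate successors are satellites. -/
  succ_sat : ∀ v w₁ w₂ w₃, D.ImPred v w₁ → D.ImPred v w₂ → D.ImPred v w₃ →
      D.IsSatellite w₁ → D.IsSatellite w₂ → D.IsSatellite w₃ →
      w₁ ≠ w₂ → w₁ ≠ w₃ → w₂ ≠ w₃ → False
  /-- Law of Succession: two distinct immediate successors of the same vertex cannot be
  satellites of the same vertex. -/
  succ_sat_diff : ∀ v w₁ w₂ t, D.ImPred v w₁ → D.ImPred v w₂ → w₁ ≠ w₂ →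
      D.RemoteProx w₁ t → D.RemoteProx w₂ t → False
  /-- Law of Minimality: every leaf of weight `1` is a satellite. -/
  minimal : ∀ v, D.IsLeaf v → D.wt v = 1 → D.IsSatellite v

/-- The number of roots. -/
noncomputable def rts : ℕ := (univ.filter (fun v => D.IsRoot v)).card

/-- The number of free vertices. -/
noncomputable def frs : ℕ := (univ.filter (fun v => D.IsFree v)).card

/-- `dim D = rts D + frs D`. -/
noncomputable def dimD : ℕ := D.rts + D.frs

/-- `deg D = Σ_V C(m_V + 1, 2)`. -/
def degD : ℕ := ∑ v, (D.wt v + 1).choose 2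

/-- `cod D = deg D - dim D`. -/
noncomputable def cod : ℤ := (D.degD : ℤ) - (D.dimD : ℤ)

/-- `δ(D) = Σ_V C(m_V, 2)`. -/
def deltaD : ℕ := ∑ v, (D.wt v).choose 2

/-- `r(D) = Σ_V (m_V - Σ_{W ≻ V} m_W)`. -/
noncomputable def rCh : ℤ :=
  ∑ v, ((D.wt v : ℤ) - ∑ w ∈ univ.filter (fun w => D.prox w v), (D.wt w : ℤ))

/-- `μ(D) = 2 δ(D) - r(D) + rts D`. -/
noncomputable def mu : ℤ := 2 * (D.deltaD : ℤ) - D.rCh + (D.rts : ℤ)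

/-- An isomorphism of diagrams: a weight-preserving bijection of the vertices preserving
the immediate-predecessor and proximity relations. -/
structure Iso (D₁ D₂ : PreDiagram) where
  toEquiv : Fin D₁.n ≃ Fin D₂.n
  wt_eq : ∀ v, D₂.wt (toEquiv v) = D₁.wt v
  imPred_iff : ∀ a b, D₂.ImPred (toEquiv a) (toEquiv b) ↔ D₁.ImPred a b
  prox_iff : ∀ a b, D₂.prox (toEquiv a) (toEquiv b) ↔ D₁.prox a b

def Isomorphic (D₁ D₂ : PreDiagram) : Prop := Nonempty (Iso D₁ D₂)

/-- A realization of `D'` as a subdiagram of `D`: an injection of the vertices such that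
the weight of a vertex of `D'` is at most its weight in `D`, and the succession
(predecessor) and proximity relations of `D'` are the ones induced from `D`. -/
structure Subdiagram (D' D : PreDiagram) where
  toFun : Fin D'.n → Fin D.n
  inj : Function.Injective toFun
  wt_le : ∀ v, D'.wt v ≤ D.wt (toFun v)
  pred_iff : ∀ a b, D'.Pred a b ↔ D.Pred (toFun a) (toFun b)
  prox_iff : ∀ a b, D'.prox a b ↔ D.prox (toFun a) (toFun b)

def IsSubdiagram (D' D : PreDiagram) : Prop := Nonempty (Subdiagram D' D)

/-- The parent function of a chain `0 → 1 → ⋯ → n-1`. -/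
def chainParent (n : ℕ) (v : Fin n) : Option (Fin n) :=
  if v.val = 0 then none
  else some ⟨v.val - 1, lt_of_le_of_lt (Nat.sub_le _ _) v.isLt⟩

/-- The diagram `A_k` (`k ≥ 1`): for `k = 2i-1`, a chain of `i` free vertices of weight `2`;
for `k = 2i`, such a chain followed by a chain of two vertices of weight `1`, both
proximate to the `i`-th weight-`2` vertex. -/
def diagA (k : ℕ) : PreDiagram where
  n := if k % 2 = 0 then k / 2 + 2 else (k + 1) / 2
  parent := chainParent _
  wt := fun v => if v.val < (k + 1) / 2 then 2 else 1
  prox := fun a b => a.val = b.val + 1 ∨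
    (k % 2 = 0 ∧ a.val = k / 2 + 1 ∧ b.val + 1 = k / 2)

/-- The diagram `D_k` (`k ≥ 4`): a root of weight `3`, followed by nothing if `k = 4`,
by two vertices of weight `1` both proximate to the root if `k = 5`, and by the diagram
`A_{k-5}` if `k ≥ 6`. -/
def diagD (k : ℕ) : PreDiagram where
  n := (k - 4) / 2 + (if k % 2 = 0 then 1 else 3)
  parent := chainParent _
  wt := fun v => if v.val = 0 then 3 else if v.val ≤ (k - 4) / 2 then 2 else 1
  prox := fun a b => a.val = b.val + 1 ∨
    (k % 2 = 1 ∧ a.val = (k - 4) / 2 + 2 ∧ b.val = (k - 4) / 2)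

/-- The diagram `E_{6l+j}` (`l ≥ 1`, `j ∈ {0,1,2}`), with argument `m = 6l + j`. -/
def diagE (m : ℕ) : PreDiagram where
  n := m / 6 + (if m % 6 = 1 then 2 else 3)
  parent := chainParent _
  wt := fun v => if v.val < m / 6 then 3 else
    if 1 ≤ m % 6 ∧ v.val = m / 6 then 2 else 1
  prox := fun a b => a.val = b.val + 1 ∨
    (m % 6 = 0 ∧ (a.val = m / 6 + 1 ∨ a.val = m / 6 + 2) ∧ b.val + 1 = m / 6) ∨
    (m % 6 = 1 ∧ a.val = m / 6 + 1 ∧ b.val + 1 = m / 6) ∨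
    (m % 6 = 2 ∧ ((a.val = m / 6 + 1 ∧ b.val + 1 = m / 6) ∨
                  (a.val = m / 6 + 2 ∧ b.val = m / 6)))

/-- The diagram `J_{l,k}` (`l ≥ 2`, `k ≥ 0`): a chain of `l - 1` free vertices of weight `3`
followed by the diagram `D_{k+4}`. -/
def diagJ (l k : ℕ) : PreDiagram where
  n := (l - 1) + k / 2 + (if k % 2 = 0 then 1 else 3)
  parent := chainParent _
  wt := fun v => if v.val ≤ l - 1 then 3 else if v.val ≤ l - 1 + k / 2 then 2 else 1
  prox := fun a b => a.val = b.val + 1 ∨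
    (k % 2 = 1 ∧ a.val = (l - 1) + k / 2 + 2 ∧ b.val = (l - 1) + k / 2)

/-- The diagram `X_{1,0}`: a single root of weight `4`. -/
def diagX10 : PreDiagram where
  n := 1
  parent := chainParent _
  wt := fun _ => 4
  prox := fun a b => a.val = b.val + 1

/-- The diagram `X_{1,1}`: a root of weight `4` followed by a chain of two vertices of
weight `1`, both proximate to the root. -/
def diagX11 : PreDiagram where
  n := 3
  parent := chainParent _
  wt := fun v => if v.val = 0 then 4 else 1
  prox := fun a b => a.val = b.val + 1 ∨ (a.val = 2 ∧ b.val = 0)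

/-- The diagram `X_{1,2}`: a root of weight `4` followed by one free vertex of weight `2`. -/
def diagX12 : PreDiagram where
  n := 2
  parent := chainParent _
  wt := fun v => if v.val = 0 then 4 else 2
  prox := fun a b => a.val = b.val + 1

/-- The diagram `Z_{11}`: a root of weight `4` followed by a chain of three vertices of
weight `1`, all proximate to the root. -/
def diagZ11 : PreDiagram where
  n := 4
  parent := chainParent _
  wt := fun v => if v.val = 0 then 4 else 1
  prox := fun a b => a.val = b.val + 1 ∨ ((a.val = 2 ∨ a.val = 3) ∧ b.val = 0)

/-- The diagram `Y_{1,1}`: a root of weight `4` with two immediate free successors of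
weight `1`, each of which has one immediate successor of weight `1` that is remotely
proximate to the root. -/
def diagY11 : PreDiagram where
  n := 5
  parent := fun v =>
    if v.val = 0 then none
    else if v.val ≤ 2 then some ⟨0, by omega⟩
    else if v.val = 3 then some ⟨1, by omega⟩
    else some ⟨2, by omega⟩
  wt := fun v => if v.val = 0 then 4 else 1
  prox := fun a b => (a.val = 1 ∧ b.val = 0) ∨ (a.val = 2 ∧ b.val = 0) ∨
    (a.val = 3 ∧ (b.val = 1 ∨ b.val = 0)) ∨ (a.val = 4 ∧ (b.val = 2 ∨ b.val = 0))

/-- The disjoint union of two diagrams. -/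
def disjUnion (D₁ D₂ : PreDiagram) : PreDiagram where
  n := D₁.n + D₂.n
  parent := fun v =>
    if h : v.val < D₁.n then
      (D₁.parent ⟨v.val, h⟩).map
        (fun w => ⟨w.val, Nat.lt_of_lt_of_le w.isLt (Nat.le_add_right _ _)⟩)
    else
      (D₂.parent ⟨v.val - D₁.n, by have := v.isLt; omega⟩).map
        (fun w => ⟨D₁.n + w.val, by have := w.isLt; omega⟩)
  wt := fun v =>
    if h : v.val < D₁.n then D₁.wt ⟨v.val, h⟩
    else D₂.wt ⟨v.val - D₁.n, by have := v.isLt; omega⟩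
  prox := fun a b =>
    (∃ (ha : a.val < D₁.n) (hb : b.val < D₁.n), D₁.prox ⟨a.val, ha⟩ ⟨b.val, hb⟩) ∨
    (∃ (_ : D₁.n ≤ a.val) (_ : D₁.n ≤ b.val),
      D₂.prox ⟨a.val - D₁.n, by have := a.isLt; omega⟩
              ⟨b.val - D₁.n, by have := b.isLt; omega⟩)

end PreDiagram

namespace PreDiagram

variable {D : PreDiagram}

theorem prox_properPred (hD : D.IsMED) {a b : Fin D.n} (h : D.prox a b) : D.ProperPred b a := by
  cases hp : D.parent a with
  | none => exact absurd h (hD.root_not_prox a hp b)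
  | some u =>
    by_cases hb : b = u
    · subst hb; exact Relation.TransGen.single hp
    · exact (hD.prox_remote a u b hp h hb).1

theorem sum_le (hD : D.IsMED) (v : Fin D.n) (S : Finset (Fin D.n)) (hS : ∀ x ∈ S, D.prox x v) :
    ∑ x ∈ S, D.wt x ≤ D.wt v := by
  refine le_trans (Finset.sum_le_sum_of_subset ?_) (hD.prox_ineq v)
  intro x hx
  simpa using hS x hx

theorem sum1 (hD : D.IsMED) {v a : Fin D.n} (ha : D.prox a v) : D.wt a ≤ D.wt v := by
  simpa using sum_le hD v {a} (by simpa using ha)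

theorem sum2 (hD : D.IsMED) {v a b : Fin D.n} (ha : D.prox a v) (hb : D.prox b v) (hab : a ≠ b) :
    D.wt a + D.wt b ≤ D.wt v := by
  have := sum_le hD v {a, b} (by simp [ha, hb])
  rwa [Finset.sum_pair hab] at this

theorem sum3 (hD : D.IsMED) {v a b c : Fin D.n} (ha : D.prox a v) (hb : D.prox b v)
    (hc : D.prox c v) (hab : a ≠ b) (hac : a ≠ c) (hbc : b ≠ c) :
    D.wt a + D.wt b + D.wt c ≤ D.wt v := by
  have := sum_le hD v {a, b, c} (by simp [ha, hb, hc])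
  rw [Finset.sum_insert (by simp [hab, hac]), Finset.sum_pair hbc] at this
  omega

theorem sum4 (hD : D.IsMED) {v a b c d : Fin D.n} (ha : D.prox a v) (hb : D.prox b v)
    (hc : D.prox c v) (hd : D.prox d v) (hab : a ≠ b) (hac : a ≠ c) (had : a ≠ d)
    (hbc : b ≠ c) (hbd : b ≠ d) (hcd : c ≠ d) :
    D.wt a + D.wt b + D.wt c + D.wt d ≤ D.wt v := by
  have := sum_le hD v {a, b, c, d} (by simp [ha, hb, hc, hd])
  rw [Finset.sum_insert (by simp [hab, hac, had]), Finset.sum_insert (by simp [hbc, hbd]),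
    Finset.sum_pair hcd] at this
  omega

theorem wt_mono (hD : D.IsMED) {a b : Fin D.n} (h : D.Pred a b) : D.wt b ≤ D.wt a := by
  induction h with
  | refl => exact le_rfl
  | tail _ h ih => exact le_trans (sum1 hD (hD.prox_parent _ _ h)) ih

theorem properPred_ne (hD : D.IsMED) {a b : Fin D.n} (h : D.ProperPred a b) : a ≠ b := by
  rintro rfl; exact hD.forest _ h

theorem pred_total {a b c : Fin D.n} (h1 : D.Pred a c) (h2 : D.Pred b c) :
    D.Pred a b ∨ D.Pred b a := by
  have U : Relator.RightUnique (Function.swap D.ImPred) := by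
    intro x y z h h'
    simp only [Function.swap, ImPred] at h h'
    rw [h] at h'; exact Option.some.inj h'
  have := Relation.ReflTransGen.total_of_right_unique U
    (Relation.reflTransGen_swap.2 h1) (Relation.reflTransGen_swap.2 h2)
  exact this.symm.imp Relation.reflTransGen_swap.1 Relation.reflTransGen_swap.1

theorem wf_down (hD : D.IsMED) : WellFounded (fun a b : Fin D.n => D.ProperPred b a) := by
  have : IsTrans (Fin D.n) (fun a b => D.ProperPred b a) := ⟨fun _ _ _ h h' => h'.trans h⟩
  have : Std.Irrefl (fun a b : Fin D.n => D.ProperPred b a) := ⟨hD.forest⟩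
  exact Finite.wellFounded_of_trans_of_irrefl _

theorem wf_up (hD : D.IsMED) : WellFounded (fun a b : Fin D.n => D.ProperPred a b) := by
  have : IsTrans (Fin D.n) (fun a b => D.ProperPred a b) := ⟨fun _ _ _ h h' => h.trans h'⟩
  have : Std.Irrefl (fun a b : Fin D.n => D.ProperPred a b) := ⟨hD.forest⟩
  exact Finite.wellFounded_of_trans_of_irrefl _

theorem exists_leaf (hD : D.IsMED) (v : Fin D.n) : ∃ w, D.Pred v w ∧ D.IsLeaf w := by
  induction v using (wf_down hD).induction with
  | _ v ih =>
    by_cases h : D.IsLeaf v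
    · exact ⟨v, .refl, h⟩
    · simp only [IsLeaf, not_forall, not_not] at h
      obtain ⟨c, hc⟩ := h
      obtain ⟨w, h1, h2⟩ := ih c (Relation.TransGen.single hc)
      exact ⟨w, .head hc h1, h2⟩

theorem root_pred (hD : D.IsMED) {R : Fin D.n} (huniq : ∀ v, D.IsRoot v → v = R) (v : Fin D.n) :
    D.Pred R v := by
  induction v using (wf_up hD).induction with
  | _ v ih =>
    cases hp : D.parent v with
    | none => rw [huniq v hp]; exact .refl
    | some u => exact (ih u (Relation.TransGen.single hp)).tail hp

theorem between_le (hD : D.IsMED) {a b c : Fin D.n} (h : D.prox a b) (h1 : D.ProperPred b c)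
    (h2 : D.Pred c a) : D.prox c b := by
  rcases Relation.reflTransGen_iff_eq_or_transGen.1 h2 with h2 | h2
  · rwa [← h2]
  · exact hD.prox_between a b c h h1 h2

theorem ne_of_child (hD : D.IsMED) {u v : Fin D.n} (h : D.ImPred u v) : u ≠ v :=
  properPred_ne hD (Relation.TransGen.single h)

/-- The key fact about a weight one vertex below a vertex of weight at least two. -/
theorem key (hD : D.IsMED) (h3 : ∀ v, D.wt v ≤ 3) {u v : Fin D.n} (huv : D.ImPred u v)
    (hv : D.wt v = 1) (hu : 2 ≤ D.wt u) :
    (∃ c, D.ImPred v c ∧ D.prox c u) ∨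
    (∃ t, D.ImPred t u ∧ D.prox v t ∧ D.wt u = 2) := by
  obtain ⟨w, hvw, hl⟩ := exists_leaf hD v
  have hw : D.wt w = 1 := le_antisymm (hv ▸ wt_mono hD hvw) (hD.wt_pos w)
  obtain ⟨t, hwt, htw, hnt⟩ := hD.minimal w hl hw
  -- the child of `t` towards `w`
  obtain ⟨c, htc, hcw⟩ := Relation.TransGen.head'_iff.1 htw
  have hcw' : c ≠ w := by rintro rfl; exact hnt htc
  have ht2 : 2 ≤ D.wt t := by
    have := sum2 hD (hD.prox_parent _ _ htc) hwt hcw'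
    have := hD.wt_pos c; have := hD.wt_pos w; omega
  have htv : ¬ D.Pred v t := fun h => by have := wt_mono hD h; omega
  have htv' : D.Pred t v := (pred_total htw.to_reflTransGen hvw).resolve_right htv
  have htvP : D.ProperPred t v := by
    rcases Relation.reflTransGen_iff_eq_or_transGen.1 htv' with h | h
    · exact absurd (h ▸ .refl) htv
    · exact h
  obtain ⟨u', htu, hu'v⟩ := Relation.TransGen.tail'_iff.1 htvP
  have : u' = u := by
    have h1 : D.parent v = some u' := hu'v
    have h2 : D.parent v = some u := huv
    rw [h1] at h2; exact Option.some.inj h2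
  subst this
  rcases Relation.reflTransGen_iff_eq_or_transGen.1 htu with h | h
  · subst h
    left
    rcases Relation.reflTransGen_iff_eq_or_transGen.1 hvw with h | h
    · subst h; exact absurd huv hnt
    · obtain ⟨c, hc, hcw⟩ := Relation.TransGen.head'_iff.1 h
      exact ⟨c, hc, between_le hD hwt ((Relation.TransGen.single huv).tail hc) hcw⟩
  · right
    have hvt : D.prox v t := between_le hD hwt htvP hvw
    have hut : D.prox u' t := between_le hD hvt h (.single huv)
    have huv2 := sum2 hD hvt hut (ne_of_child hD huv).symm
    have := h3 t
    obtain ⟨p, htp, hpu⟩ := Relation.TransGen.tail'_iff.1 h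
    rcases Relation.reflTransGen_iff_eq_or_transGen.1 htp with h | h
    · subst h; exact ⟨_, hpu, hvt, by omega⟩
    · have hpt : D.prox p t := between_le hD hut h (.single hpu)
      have := sum2 hD hut hpt (ne_of_child hD hpu).symm
      have := wt_mono hD (Relation.ReflTransGen.single hpu)
      omega

theorem child_unique (hD : D.IsMED) (h3 : ∀ v, D.wt v ≤ 3) {u v v' : Fin D.n}
    (h : D.ImPred u v) (h' : D.ImPred u v') : v = v' := by
  by_contra hne
  have hpv := hD.prox_parent _ _ h
  have hpv' := hD.prox_parent _ _ h'
  have p1 := hD.wt_pos v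
  have p2 := hD.wt_pos v'
  have hs := sum2 hD hpv hpv' hne
  have aux : ∀ x y c, D.ImPred u x → D.ImPred u y → x ≠ y → D.ImPred x c → D.prox c u →
      c ≠ x ∧ c ≠ y := by
    intro x y c hx hy hxy hc _
    refine ⟨(ne_of_child hD hc).symm, ?_⟩
    rintro rfl
    have h1 : D.parent c = some x := hc
    have h2 : D.parent c = some u := hy
    rw [h1] at h2
    exact ne_of_child hD hx (Option.some.inj h2).symm
  have key1 : ∀ x y, D.ImPred u x → D.ImPred u y → x ≠ y → D.wt x = 1 → D.wt y = 1 →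
      (∃ c, D.ImPred x c ∧ D.prox c u) → False := by
    rintro x y hx hy hxy wx wy ⟨c, hc, hcu⟩
    have px := hD.prox_parent _ _ hx
    have py := hD.prox_parent _ _ hy
    obtain ⟨n1, n2⟩ := aux x y c hx hy hxy hc hcu
    have s3 := sum3 hD px py hcu hxy n1.symm n2.symm
    have := hD.wt_pos c
    have := h3 u
    rcases key hD h3 hy wy (by omega) with ⟨c', hc', hcu'⟩ | ⟨t, -, -, h2⟩
    · obtain ⟨n1', n2'⟩ := aux y x c' hy hx hxy.symm hc' hcu'
      have hcc : c ≠ c' := by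
        rintro rfl
        have h1 : D.parent c = some x := hc
        have h2 : D.parent c = some y := hc'
        rw [h1] at h2
        exact hxy (Option.some.inj h2)
      have := sum4 hD px py hcu hcu' hxy n1.symm n2'.symm n2.symm n1'.symm hcc
      have := hD.wt_pos c'
      omega
    · omega
  have key2 : ∀ x y, D.ImPred u x → D.ImPred u y → x ≠ y → D.wt x = 1 →  False := by
    rintro x y hx hy hxy wx
    have px := hD.prox_parent _ _ hx
    have py := hD.prox_parent _ _ hy
    have s2 := sum2 hD px py hxy
    have := hD.wt_pos y
    have := h3 u
    rcases key hD h3 hx wx (by omega) with ⟨c, hc, hcu⟩ | ⟨t, htu, hxt, h2⟩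
    · obtain ⟨n1, n2⟩ := aux x y c hx hy hxy hc hcu
      have s3 := sum3 hD px py hcu hxy n1.symm n2.symm
      have := hD.wt_pos c
      exact key1 x y hx hy hxy wx (by omega) ⟨c, hc, hcu⟩
    · have wy : D.wt y = 1 := by omega
      rcases key hD h3 hy wy (by omega) with ⟨c, hc, hcu⟩ | ⟨t', htu', hyt, -⟩
      · exact key1 y x hy hx hxy.symm wy wx ⟨c, hc, hcu⟩
      · have h1 : D.parent u = some t := htu
        have h2 : D.parent u = some t' := htu'
        rw [h1] at h2
        obtain rfl := Option.some.inj h2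
        have := sum3 hD (hD.prox_parent _ _ htu) hxt hyt (ne_of_child hD hx)
          (ne_of_child hD hy) hxy
        have := h3 t
        omega
  have := h3 u
  rcases (show D.wt v = 1 ∨ D.wt v' = 1 by omega) with w | w
  · exact key2 v v' h h' hne w
  · exact key2 v' v h' h (Ne.symm hne) w

/-- The diagram is a chain. -/
theorem exists_chain (hD : D.IsMED) (h3 : ∀ v, D.wt v ≤ 3) {R : Fin D.n}
    (huniq : ∀ v, D.IsRoot v → v = R) :
    ∃ (N : ℕ) (f : ℕ → Fin D.n), f 0 = R ∧ (∀ i < N, D.ImPred (f i) (f (i + 1))) ∧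
      D.IsLeaf (f N) ∧ ∀ v, ∃ i ≤ N, f i = v := by
  let nx : Fin D.n → Fin D.n := fun v => if h : ∃ w, D.ImPred v w then h.choose else v
  have hnx : ∀ v, ¬ D.IsLeaf v → D.ImPred v (nx v) := by
    intro v h
    simp only [IsLeaf, not_forall, not_not] at h
    simp only [nx, dif_pos h]
    exact h.choose_spec
  let f : ℕ → Fin D.n := fun i => nx^[i] R
  have hf : ∀ i, f (i + 1) = nx (f i) := fun i => Function.iterate_succ_apply' nx i R
  have hex : ∃ N, D.IsLeaf (f N) := by
    by_contra hno
    push Not at hno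
    have hstep : ∀ i, D.ImPred (f i) (f (i + 1)) := fun i => by rw [hf]; exact hnx _ (hno i)
    have hlt : ∀ i k, D.ProperPred (f i) (f (i + k + 1)) := by
      intro i k
      induction k with
      | zero => exact .single (hstep i)
      | succ k ih => exact ih.tail (hstep _)
    have hinj : Function.Injective f := by
      intro i j hij
      rcases lt_trichotomy i j with h | h | h
      · obtain ⟨k, rfl⟩ := Nat.exists_eq_add_of_lt h
        exact absurd hij (properPred_ne hD (hlt i k))
      · exact h
      · obtain ⟨k, rfl⟩ := Nat.exists_eq_add_of_lt h
        exact absurd hij.symm (properPred_ne hD (hlt j k))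
    exact not_injective_infinite_finite f hinj
  have hst : ∀ i < Nat.find hex, D.ImPred (f i) (f (i + 1)) := fun i hi => by
    rw [hf]; exact hnx _ (Nat.find_min hex hi)
  refine ⟨Nat.find hex, f, rfl, hst, Nat.find_spec hex, ?_⟩
  intro v
  have hv := root_pred hD huniq v
  induction hv with
  | refl => exact ⟨0, Nat.zero_le _, rfl⟩
  | tail _ h ih =>
    obtain ⟨i, hi, rfl⟩ := ih
    rcases Nat.lt_or_ge i (Nat.find hex) with h' | h'
    · exact ⟨i + 1, h', child_unique hD h3 (hst i h') h⟩
    · have : i = Nat.find hex := le_antisymm hi h'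
      exact absurd h (this ▸ Nat.find_spec hex _)

theorem chainParent_iff (n : ℕ) (v u : Fin n) :
    chainParent n v = some u ↔ v.val = u.val + 1 := by
  unfold chainParent
  split_ifs with h
  · simp; omega
  · simp [Fin.ext_iff]; omega

/-- Purely numerical data extracted from a chain. -/
structure Num (N : ℕ) (w : ℕ → ℕ) (p : ℕ → ℕ → Prop) : Prop where
  w0 : w 0 = 3
  anti : ∀ i j, i ≤ j → j ≤ N → w j ≤ w i
  pos : ∀ i, 1 ≤ w i
  plt : ∀ a b, a ≤ N → b ≤ N → p a b → b < a
  psucc : ∀ b, b < N → p (b + 1) b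
  puniq : ∀ a b c, a ≤ N → p a b → p a c → b + 2 ≤ a → c + 2 ≤ a → b = c
  pbet : ∀ a b c, a ≤ N → p a b → b < c → c ≤ a → p c b
  s2 : ∀ a b, a ≤ N → p a b → b + 2 ≤ a → w (b + 1) + w a ≤ w b
  s3 : ∀ a b, a ≤ N → p a b → b + 3 ≤ a → w (b + 1) + w (b + 2) + w a ≤ w b
  s4 : ∀ a b, a ≤ N → p a b → b + 4 ≤ a → w (b + 1) + w (b + 2) + w (b + 3) + w a ≤ w b
  mini : w N = 1 → ∃ t, t + 2 ≤ N ∧ p N t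

theorem toNum (hD : D.IsMED) (R : Fin D.n) (hw : D.wt R = 3) (N : ℕ) (f : ℕ → Fin D.n)
    (f0 : f 0 = R) (hst : ∀ i < N, D.ImPred (f i) (f (i + 1))) (hl : D.IsLeaf (f N))
    (hsurj : ∀ v, ∃ i ≤ N, f i = v) :
    (∀ i j, i ≤ N → j ≤ N → f i = f j → i = j) ∧
    (∀ i j, i ≤ N → j ≤ N → (D.ImPred (f i) (f j) ↔ j = i + 1)) ∧
    Num N (fun i => D.wt (f i)) (fun i j => D.prox (f i) (f j)) := by
  have hlt' : ∀ i k, i + k + 1 ≤ N → D.ProperPred (f i) (f (i + k + 1)) := by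
    intro i k
    induction k with
    | zero => intro h; exact .single (hst i h)
    | succ k ih => intro h; exact (ih (by omega)).tail (hst _ (by omega))
  have hlt : ∀ i j, i < j → j ≤ N → D.ProperPred (f i) (f j) := by
    intro i j h hj
    obtain ⟨k, rfl⟩ := Nat.exists_eq_add_of_lt h
    exact hlt' i k hj
  have hinj : ∀ i j, i ≤ N → j ≤ N → f i = f j → i = j := by
    intro i j hi hj hij
    rcases lt_trichotomy i j with h | h | h
    · exact absurd hij (properPred_ne hD (hlt _ _ h hj))
    · exact h
    · exact absurd hij.symm (properPred_ne hD (hlt _ _ h hi))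
  have hlt2 : ∀ i j, i ≤ N → j ≤ N → D.ProperPred (f i) (f j) → i < j := by
    intro i j hi hj h
    rcases lt_trichotomy i j with h' | h' | h'
    · exact h'
    · subst h'; exact absurd h (hD.forest _)
    · exact absurd (h.trans (hlt _ _ h' hi)) (hD.forest _)
  have him : ∀ i j, i ≤ N → j ≤ N → (D.ImPred (f i) (f j) ↔ j = i + 1) := by
    intro i j hi hj
    constructor
    · intro h
      have hij := hlt2 i j hi hj (.single h)
      obtain ⟨k, rfl⟩ : ∃ k, j = k + 1 := ⟨j - 1, by omega⟩
      have h1 : D.parent (f (k + 1)) = some (f i) := h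
      have h2 : D.parent (f (k + 1)) = some (f k) := hst k (by omega)
      rw [h1] at h2
      rw [hinj i k hi (by omega) (Option.some.inj h2)]
    · rintro rfl; exact hst i (by omega)
  have hbet : ∀ a b c, a ≤ N → D.prox (f a) (f b) → b < c → c ≤ a → D.prox (f c) (f b) := by
    intro a b c ha h hbc hca
    rcases hca.eq_or_lt with rfl | hca
    · exact h
    · exact hD.prox_between _ _ _ h (hlt _ _ hbc (by omega)) (hlt _ _ hca ha)
  have hne : ∀ i j, i ≤ N → j ≤ N → i ≠ j → f i ≠ f j := fun i j hi hj h h' => h (hinj i j hi hj h')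
  refine ⟨hinj, him, ?_⟩
  constructor
  · simp [f0, hw]
  · intro i j hij hj
    rcases hij.eq_or_lt with rfl | hij
    · exact le_rfl
    · exact wt_mono hD (hlt _ _ hij hj).to_reflTransGen
  · intro i; exact hD.wt_pos _
  · intro a b ha hb h
    exact hlt2 _ _ hb ha (prox_properPred hD h)
  · intro b hb; exact hD.prox_parent _ _ (hst b hb)
  · intro a b c ha hb hc hba hca
    obtain ⟨k, rfl⟩ : ∃ k, a = k + 1 := ⟨a - 1, by omega⟩
    exact hinj b c (by omega) (by omega) (hD.prox_unique (f (k + 1)) (f k) (f b) (f c)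
      (hst k (by omega)) hb hc (hne _ _ (by omega) (by omega) (by omega))
      (hne _ _ (by omega) (by omega) (by omega)))
  · exact hbet
  · intro a b ha h hba
    exact sum2 hD (hbet a b (b + 1) ha h (by omega) (by omega)) h
      (hne _ _ (by omega) (by omega) (by omega))
  · intro a b ha h hba
    exact sum3 hD (hbet a b (b + 1) ha h (by omega) (by omega))
      (hbet a b (b + 2) ha h (by omega) (by omega)) h
      (hne _ _ (by omega) (by omega) (by omega))
      (hne _ _ (by omega) (by omega) (by omega)) (hne _ _ (by omega) (by omega) (by omega))
  · intro a b ha h hba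
    exact sum4 hD (hbet a b (b + 1) ha h (by omega) (by omega))
      (hbet a b (b + 2) ha h (by omega) (by omega))
      (hbet a b (b + 3) ha h (by omega) (by omega)) h
      (hne _ _ (by omega) (by omega) (by omega)) (hne _ _ (by omega) (by omega) (by omega))
      (hne _ _ (by omega) (by omega) (by omega)) (hne _ _ (by omega) (by omega) (by omega))
      (hne _ _ (by omega) (by omega) (by omega)) (hne _ _ (by omega) (by omega) (by omega))
  · intro h
    obtain ⟨t, h1, h2, h3⟩ := hD.minimal _ hl h
    obtain ⟨i, hi, rfl⟩ := hsurj t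
    have := hlt2 i N hi le_rfl h2
    have h4 : ¬ N = i + 1 := fun h => h3 ((him i N hi le_rfl).2 h)
    exact ⟨i, by omega, h1⟩

theorem mkIso (N : ℕ) (f : ℕ → Fin D.n)
    (hsurj : ∀ v, ∃ i ≤ N, f i = v)
    (hinj : ∀ i j, i ≤ N → j ≤ N → f i = f j → i = j)
    (him : ∀ i j, i ≤ N → j ≤ N → (D.ImPred (f i) (f j) ↔ j = i + 1))
    (E : PreDiagram) (hn : E.n = N + 1)
    (hpar : ∀ v u, E.parent v = some u ↔ v.val = u.val + 1)
    (hwt : ∀ v, E.wt v = D.wt (f v.val))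
    (hp : ∀ a b, E.prox a b ↔ D.prox (f a.val) (f b.val)) : Isomorphic D E := by
  have hN : ∀ v : Fin E.n, v.val ≤ N := fun v => by have := v.isLt; omega
  let e : Fin E.n ≃ Fin D.n := Equiv.ofBijective (fun i => f i.val) ⟨
    fun i j h => Fin.ext (hinj _ _ (hN i) (hN j) h),
    fun v => by
      obtain ⟨i, hi, rfl⟩ := hsurj v
      exact ⟨⟨i, by omega⟩, rfl⟩⟩
  have he : ∀ i, e i = f i.val := fun _ => rfl
  refine ⟨⟨e.symm, ?_, ?_, ?_⟩⟩
  · intro v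
    obtain ⟨i, rfl⟩ := e.surjective v
    rw [Equiv.symm_apply_apply, hwt, he]
  · intro a b
    obtain ⟨i, rfl⟩ := e.surjective a
    obtain ⟨j, rfl⟩ := e.surjective b
    simp only [Equiv.symm_apply_apply]
    rw [he, he, him _ _ (hN i) (hN j)]
    exact hpar j i
  · intro a b
    obtain ⟨i, rfl⟩ := e.surjective a
    obtain ⟨j, rfl⟩ := e.surjective b
    simp only [Equiv.symm_apply_apply]
    rw [he, he, hp]

/-- A numerical match of the chain data with an explicit diagram. -/
def Match (N : ℕ) (w : ℕ → ℕ) (p : ℕ → ℕ → Prop) (E : PreDiagram) : Prop :=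
  E.n = N + 1 ∧ (∀ v u, E.parent v = some u ↔ v.val = u.val + 1) ∧
    (∀ v, E.wt v = w v.val) ∧ ∀ a b, E.prox a b ↔ p a.val b.val

theorem matchJ {N : ℕ} {w : ℕ → ℕ} {p : ℕ → ℕ → Prop} (l m e : ℕ) (hl : 1 ≤ l) (he : e ≤ 1)
    (hn : N + 1 = l + m + 2 * e)
    (hw : ∀ i ≤ N, w i = if i < l then 3 else if i < l + m then 2 else 1)
    (hp : ∀ a b, a ≤ N → b ≤ N →
      (p a b ↔ a = b + 1 ∨ (e = 1 ∧ a = l + m + 1 ∧ b + 1 = l + m))) :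
    Match N w p (diagJ l (2 * m + e)) := by
  have h1 : (2 * m + e) / 2 = m := by omega
  have h2 : (2 * m + e) % 2 = e := by omega
  have hE : (diagJ l (2 * m + e)).n = N + 1 := by
    simp only [diagJ, h1, h2]
    split_ifs <;> omega
  have hN : ∀ v : Fin (diagJ l (2 * m + e)).n, v.val ≤ N := fun v => by have := v.isLt; omega
  refine ⟨hE, chainParent_iff _, ?_, ?_⟩
  · intro v
    rw [hw _ (hN v)]
    have aux : ∀ i : ℕ, (if i ≤ l - 1 then 3 else if i ≤ l - 1 + m then 2 else 1) =
        if i < l then 3 else if i < l + m then 2 else 1 := by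
      intro i
      split_ifs <;> omega
    simp only [diagJ, h1]
    exact aux _
  · intro a b
    rw [hp _ _ (hN a) (hN b)]
    simp only [diagJ, h1, h2]
    omega

theorem matchE {N : ℕ} {w : ℕ → ℕ} {p : ℕ → ℕ → Prop} (l j : ℕ) (hj : j ≤ 2)
    (hn : N + 1 = l + (if j = 1 then 2 else 3))
    (hw : ∀ i ≤ N, w i = if i < l then 3 else if 1 ≤ j ∧ i = l then 2 else 1)
    (hp : ∀ a b, a ≤ N → b ≤ N → (p a b ↔ a = b + 1 ∨
      (j = 0 ∧ (a = l + 1 ∨ a = l + 2) ∧ b + 1 = l) ∨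
      (j = 1 ∧ a = l + 1 ∧ b + 1 = l) ∨
      (j = 2 ∧ ((a = l + 1 ∧ b + 1 = l) ∨ (a = l + 2 ∧ b = l))))) :
    Match N w p (diagE (6 * l + j)) := by
  have h1 : (6 * l + j) / 6 = l := by omega
  have h2 : (6 * l + j) % 6 = j := by omega
  have hE : (diagE (6 * l + j)).n = N + 1 := by
    simp only [diagE, h1, h2]
    omega
  have hN : ∀ v : Fin (diagE (6 * l + j)).n, v.val ≤ N := fun v => by have := v.isLt; omega
  refine ⟨hE, chainParent_iff _, ?_, ?_⟩
  · intro v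
    rw [hw _ (hN v)]
    simp only [diagE, h1, h2]
  · intro a b
    rw [hp _ _ (hN a) (hN b)]
    simp only [diagE, h1, h2]

/-- The numerical classification. -/
theorem classify {N : ℕ} {w : ℕ → ℕ} {p : ℕ → ℕ → Prop} (H : Num N w p) :
    (∃ l j, 1 ≤ l ∧ j ≤ 2 ∧ Match N w p (diagE (6 * l + j))) ∨
    (∃ l k, 1 ≤ l ∧ Match N w p (diagJ l k)) := by
  -- number of vertices of weight three
  obtain ⟨l, hl1, hlN, hl3, hl2⟩ : ∃ l, 1 ≤ l ∧ l ≤ N + 1 ∧ (∀ i < l, w i = 3) ∧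
      ∀ i, l ≤ i → i ≤ N → w i ≤ 2 := by
    have hex : ∃ l, N < l ∨ w l ≤ 2 := ⟨N + 1, Or.inl (by omega)⟩
    refine ⟨Nat.find hex, ?_, Nat.find_min' hex (Or.inl (by omega)), ?_, ?_⟩
    · rw [Nat.one_le_iff_ne_zero]
      intro h
      have := Nat.find_spec hex
      rw [h, H.w0] at this
      omega
    · intro i hi
      have := Nat.find_min hex hi
      have h0 := H.anti 0 i (by omega) (by omega)
      rw [H.w0] at h0
      omega
    · intro i hi hiN
      have := Nat.find_spec hex
      have := H.anti _ _ hi hiN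
      omega
  obtain ⟨m, hmN, hm2, hm1⟩ : ∃ m, l + m ≤ N + 1 ∧ (∀ i, l ≤ i → i < l + m → w i = 2) ∧
      ∀ i, l + m ≤ i → i ≤ N → w i = 1 := by
    have hex : ∃ m, N < l + m ∨ w (l + m) ≤ 1 := ⟨N + 1, Or.inl (by omega)⟩
    refine ⟨Nat.find hex, ?_, ?_, ?_⟩
    · have : Nat.find hex ≤ N + 1 - l := Nat.find_min' hex (Or.inl (by omega))
      omega
    · intro i hi hi'
      have := Nat.find_min hex (m := i - l) (by omega)
      rw [show l + (i - l) = i by omega] at this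
      have := hl2 i hi (by omega)
      omega
    · intro i hi hiN
      have := Nat.find_spec hex
      have := H.anti _ _ hi hiN
      have := H.pos i
      omega
  have hle3 : ∀ i ≤ N, w i ≤ 3 := fun i hi => H.w0 ▸ H.anti 0 i (by omega) hi
  -- no remote proximity among vertices of weight at least two
  have hbig : ∀ i, i < l + m → 2 ≤ w i := by
    intro i hi
    rcases Nat.lt_or_ge i l with h | h
    · have := hl3 i h; omega
    · have := hm2 i h hi; omega
  have norem : ∀ a b, a ≤ N → a < l + m → p a b → ¬ b + 2 ≤ a := by
    intro a b ha ha' h hb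
    have := H.s2 a b ha h hb
    have := hbig a ha'
    have := hbig (b + 1) (by omega)
    have := hle3 b (by omega)
    omega
  have hwv : ∀ i ≤ N, w i = if i < l then 3 else if i < l + m then 2 else 1 := by
    intro i hi
    split_ifs with h h'
    · exact hl3 i h
    · exact hm2 i (by omega) h'
    · exact hm1 i (by omega) hi
  -- splitting of proximity into immediate and remote
  have psplit : ∀ a b, a ≤ N → b ≤ N → (p a b ↔ a = b + 1 ∨ (b + 2 ≤ a ∧ p a b)) := by
    intro a b ha hb
    constructor
    · intro h
      have := H.plt a b ha hb h
      by_cases h' : a = b + 1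
      · exact Or.inl h'
      · exact Or.inr ⟨by omega, h⟩
    · rintro (rfl | h)
      · exact H.psucc b (by omega)
      · exact h.2
  by_cases hc : N + 1 = l + m
  · right
    refine ⟨l, 2 * m + 0, hl1, matchJ l m 0 hl1 (by omega) (by omega) hwv ?_⟩
    intro a b ha hb
    rw [psplit a b ha hb]
    constructor
    · rintro (h | ⟨h1, h2⟩)
      · exact Or.inl h
      · exact absurd h1 (norem a b ha (by omega) h2)
    · rintro (h | h)
      · exact Or.inl h
      · omega
  obtain ⟨t, ht, hpt⟩ := H.mini (hm1 N (by omega) le_rfl)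
  have htw := H.s2 N t le_rfl hpt ht
  have hp1 := H.pos (t + 1)
  have hp2 := H.pos (t + 2)
  have hp3 := H.pos (t + 3)
  have hpN := H.pos N
  have ht3 := hle3 t (by omega)
  have hts : t < l + m := by
    by_contra h
    have := hm1 t (by omega) (by omega)
    omega
  by_cases hts1 : t + 1 < l + m
  · -- the case `E_{6l+1}`
    have hb1 := hbig (t + 1) hts1
    have hN : N = t + 2 := by
      by_contra h
      have := H.s3 N t le_rfl hpt (by omega)
      omega
    have e1 := hwv t (by omega)
    have e2 := hwv (t + 1) (by omega)
    have e3 := hwv (t + 2) (by omega)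
    subst hN
    have hlt : l = t + 1 := by split_ifs at e1 e2 e3 <;> omega
    have hm : m = 1 := by omega
    subst hlt hm
    left
    refine ⟨t + 1, 1, hl1, by omega, matchE (t + 1) 1 (by omega) (by simp) ?_ ?_⟩
    · intro i hi
      rw [hwv i hi]
      split_ifs <;> omega
    · intro a b ha hb
      rw [psplit a b ha hb]
      constructor
      · rintro (h | ⟨h1, h2⟩)
        · exact Or.inl h
        · have := norem a b ha
          have ha' : a = t + 2 := by
            by_contra h
            exact norem a b ha (by omega) h2 h1
          subst ha'
          have := H.puniq (t + 2) b t le_rfl h2 hpt h1 le_rfl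
          omega
      · rintro (h | h)
        · exact Or.inl h
        · right
          obtain rfl : a = t + 2 := by omega
          obtain rfl : b = t := by omega
          exact ⟨by omega, hpt⟩
  have hts' : l + m = t + 1 := by omega
  have hwt := hwv t (by omega)
  -- remote proximity of the first vertex of weight one
  have hfirst : ∀ b, b + 2 ≤ t + 1 → p (t + 1) b → m = 1 ∧ b + 1 = t := by
    intro b hb h
    have h1 := H.s2 (t + 1) b (by omega) h hb
    have h2 := hbig (b + 1) (by omega)
    have h3 := hle3 b (by omega)
    have h4 : b + 1 = t := by
      by_contra h'
      have := H.s3 (t + 1) b (by omega) h (by omega)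
      have := hbig (b + 2) (by omega)
      omega
    have e1 := hwv b (by omega)
    have e2 := hwv (b + 1) (by omega)
    refine ⟨?_, h4⟩
    split_ifs at e1 e2 <;> omega
  have hN3 : N ≤ t + 3 := by
    by_contra h
    have := H.s4 N t le_rfl hpt (by omega)
    omega
  by_cases hN : N = t + 3
  · -- the case `E_{6l}`
    have hs3 := H.s3 N t le_rfl hpt (by omega)
    have hm : m = 0 := by split_ifs at hwt <;> omega
    subst hN hm
    obtain rfl : l = t + 1 := by omega
    left
    refine ⟨t + 1, 0, hl1, by omega, matchE (t + 1) 0 (by omega) (by simp) ?_ ?_⟩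
    · intro i hi
      rw [hwv i hi]
      split_ifs <;> omega
    · have hpt2 : p (t + 2) t := H.pbet _ _ _ le_rfl hpt (by omega) (by omega)
      intro a b ha hb
      rw [psplit a b ha hb]
      constructor
      · rintro (h | ⟨h1, h2⟩)
        · exact Or.inl h
        · have ha' : ¬ a < t + 1 := fun h => norem a b ha (by omega) h2 h1
          rcases (show a = t + 1 ∨ a = t + 2 ∨ a = t + 3 by omega) with rfl | rfl | rfl
          · have := hfirst b h1 h2
            omega
          · have := H.puniq (t + 2) b t (by omega) h2 hpt2 h1 (by omega)
            omega
          · have := H.puniq (t + 3) b t (by omega) h2 hpt h1 (by omega)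
            omega
      · rintro (h | h)
        · exact Or.inl h
        · right
          obtain rfl : b = t := by omega
          rcases (show a = b + 2 ∨ a = b + 3 by omega) with rfl | rfl
          · exact ⟨by omega, hpt2⟩
          · exact ⟨by omega, hpt⟩
  obtain rfl : N = t + 2 := by omega
  by_cases hE2 : ∃ b, b + 2 ≤ t + 1 ∧ p (t + 1) b
  · -- the case `E_{6l+2}`
    obtain ⟨b₀, hb₀, hpb₀⟩ := hE2
    obtain ⟨rfl, rfl⟩ := hfirst b₀ hb₀ hpb₀
    obtain rfl : l = b₀ + 1 := by omega
    left
    refine ⟨b₀ + 1, 2, hl1, by omega, matchE (b₀ + 1) 2 (by omega) (by simp) ?_ ?_⟩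
    · intro i hi
      rw [hwv i hi]
      split_ifs <;> omega
    · intro a b ha hb
      rw [psplit a b ha hb]
      constructor
      · rintro (h | ⟨h1, h2⟩)
        · exact Or.inl h
        · have ha' : ¬ a < b₀ + 2 := fun h => norem a b ha (by omega) h2 h1
          rcases (show a = b₀ + 2 ∨ a = b₀ + 3 by omega) with rfl | rfl
          · have := hfirst b (by omega) h2
            omega
          · have := H.puniq (b₀ + 3) b (b₀ + 1) (by omega) h2 hpt h1 (by omega)
            omega
      · rintro (h | h)
        · exact Or.inl h
        · right
          rcases (show (a = b₀ + 2 ∧ b = b₀) ∨ (a = b₀ + 3 ∧ b = b₀ + 1) by omega) with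
            ⟨rfl, rfl⟩ | ⟨rfl, rfl⟩
          · exact ⟨by omega, hpb₀⟩
          · exact ⟨by omega, hpt⟩
  · right
    refine ⟨l, 2 * m + 1, hl1, matchJ l m 1 hl1 (by omega) (by omega) hwv ?_⟩
    intro a b ha hb
    rw [psplit a b ha hb]
    constructor
    · rintro (h | ⟨h1, h2⟩)
      · exact Or.inl h
      · have ha' : ¬ a < t + 1 := fun h => norem a b ha (by omega) h2 h1
        rcases (show a = t + 1 ∨ a = t + 2 by omega) with rfl | rfl
        · exact absurd ⟨b, h1, h2⟩ hE2
        · have := H.puniq (t + 2) b t (by omega) h2 hpt h1 (by omega)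
          omega
    · rintro (h | h)
      · exact Or.inl h
      · right
        obtain rfl : b = t := by omega
        obtain rfl : a = b + 2 := by omega
        exact ⟨by omega, hpt⟩

theorem match_D {N : ℕ} {w : ℕ → ℕ} {p : ℕ → ℕ → Prop} {k : ℕ} (h : Match N w p (diagJ 1 k)) :
    Match N w p (diagD (k + 4)) := by
  have h1 : (k + 4) % 2 = k % 2 := by omega
  have hn : (diagD (k + 4)).n = (diagJ 1 k).n := by simp [diagD, diagJ, h1]
  obtain ⟨hN, _, hw, hp⟩ := h
  refine ⟨hn.trans hN, chainParent_iff _, ?_, ?_⟩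
  · intro v
    have := hw ⟨v.val, hn ▸ v.isLt⟩
    simp only [← this]
    simp [diagD, diagJ]
  · intro a b
    have := hp ⟨a.val, hn ▸ a.isLt⟩ ⟨b.val, hn ▸ b.isLt⟩
    simp only [← this]
    simp [diagD, diagJ, h1]

end PreDiagram

open PreDiagram in
/-- A minimal Enriques diagram with exactly one root `R` of weight `3` is isomorphic to
`D_k` for some `k ≥ 4`, or to `E_{6l+j}` for some `l ≥ 1` and `j ∈ {0,1,2}`, or to
`J_{l,k}` for some `l ≥ 2` and `k ≥ 0`. -/
theorem statement3 (D : PreDiagram) (hD : D.IsMED) (R : Fin D.n)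
    (hR : D.IsRoot R) (huniq : ∀ v, D.IsRoot v → v = R) (hw : D.wt R = 3) :
    (∃ k, 4 ≤ k ∧ Isomorphic D (diagD k)) ∨
    (∃ l j, 1 ≤ l ∧ j ≤ 2 ∧ Isomorphic D (diagE (6 * l + j))) ∨
    (∃ l k, 2 ≤ l ∧ Isomorphic D (diagJ l k)) := by
  have h3 : ∀ v, D.wt v ≤ 3 := fun v => hw ▸ wt_mono hD (root_pred hD huniq v)
  obtain ⟨N, f, f0, hst, hl, hsurj⟩ := exists_chain hD h3 huniq
  obtain ⟨hinj, him, H⟩ := toNum hD R hw N f f0 hst hl hsurj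
  have toIso : ∀ E, Match N (fun i => D.wt (f i)) (fun i j => D.prox (f i) (f j)) E →
      Isomorphic D E := fun E h => mkIso N f hsurj hinj him E h.1 h.2.1 h.2.2.1 h.2.2.2
  rcases classify H with ⟨l, j, hl, hj, h⟩ | ⟨l, k, hl, h⟩
  · exact Or.inr (Or.inl ⟨l, j, hl, hj, toIso _ h⟩)
  · rcases hl.eq_or_lt with rfl | hl
    · left
      refine ⟨k + 4, by omega, toIso _ (match_D h)⟩
    · exact Or.inr (Or.inr ⟨l, k, hl, toIso _ h⟩)
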